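/- Let K be a field and let (a_n) and (b_n) be sequences in K annihilated by monic polynomials p(x) and q(x) of degrees d ≥ 1 and e ≥ 1 respectively. Then the product sequence (a_n · b_n) is annihilated by the characteristic polynomial of the Kronecker (tensor) product C_p ⊗ C_q, where C_p and C_q are the companion matrices of p and q. In particular, (a_n · b_n) satisfies a linear recurrence of order d·e with constant coefficients. -/

import Mathlib

open Kronecker

/-- A monic polynomial `f = xᵏ − c₁xᵏ⁻¹ − ⋯ − c_k` annihilates a sequence `s` if
`s (n+k) = c₁ • s (n+k-1) + ⋯ + c_k • s n` for all `n ≥ 0`; equivalently,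
`∑_{i=0}^{k} (coeff f i) • s (n+i) = 0` for all `n`. -/
def Annihilates {K : Type*} [CommRing K] (f : Polynomial K) (s : ℕ → K) : Prop :=
  ∀ n : ℕ, ∑ i ∈ Finset.range (f.natDegree + 1), f.coeff i * s (n + i) = 0

/-- The companion matrix of a monic polynomial `f` of degree `d`: the `d × d` matrix
with `1`'s on the subdiagonal and last column the negated lower-order coefficients. -/
def companionMatrix {K : Type*} [CommRing K] (d : ℕ) (f : Polynomial K) :
    Matrix (Fin d) (Fin d) K :=
  Matrix.of fun i j =>
    if (i : ℕ) = (j : ℕ) + 1 then 1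
    else if (j : ℕ) = d - 1 then -f.coeff i else 0

/-!
Write `w n = (a n, …, a (n + d - 1))`. The recurrence for `a` says exactly that the row vectors
`w n` satisfy `w n * C_p = w (n + 1)`. The tensor product of the window vectors of `a` and `b` is
therefore moved one step forward by `C_p ⊗ C_q`. Its entry at `(0, 0)` is `a n * b n`, and by
Cayley–Hamilton every entry of an orbit of a matrix is annihilated by its characteristic polynomial.
-/

section

open Matrix Polynomial

theorem vecMul_pow_of_vecMul_eq_succ {R ι : Type*} [Semiring R] [Fintype ι] [DecidableEq ι]
    {M : Matrix ι ι R} {w : ℕ → ι → R} (hw : ∀ n, w n ᵥ* M = w (n + 1)) (n k : ℕ) :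
    w n ᵥ* M ^ k = w (n + k) := by
  induction k with
  | zero => simp
  | succ k ih => rw [pow_succ, ← vecMul_vecMul, ih, hw, add_assoc]

theorem annihilates_of_vecMul_eq_succ_of_aeval_eq_zero {R ι : Type*} [CommRing R] [Fintype ι]
    [DecidableEq ι] {M : Matrix ι ι R} {w : ℕ → ι → R} (hw : ∀ n, w n ᵥ* M = w (n + 1))
    {f : R[X]} (hf : aeval M f = 0) (i : ι) :
    Annihilates f fun n => w n i := by
  intro n
  calc ∑ k ∈ Finset.range (f.natDegree + 1), f.coeff k * w (n + k) i
      = (w n ᵥ* aeval M f) i := by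
        simp [aeval_eq_sum_range, vecMul_sum, vecMul_smul, vecMul_pow_of_vecMul_eq_succ hw]
    _ = 0 := by rw [hf, vecMul_zero, Pi.zero_apply]

theorem vec_vecMulVec_vecMul_kronecker {R l m n p : Type*} [CommSemiring R] [Fintype l] [Fintype n]
    (u : l → R) (v : n → R) (A : Matrix l m R) (B : Matrix n p R) :
    vec (vecMulVec v u) ᵥ* (A ⊗ₖ B) = vec (vecMulVec (v ᵥ* B) (u ᵥ* A)) := by
  rw [vec_vecMul_kronecker, mul_vecMulVec, vecMulVec_mul, mulVec_transpose]

/-- The window of `d` consecutive terms of the sequence `s` starting at index `n`, the state vector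
of a recurrence of order `d`. It is used as a row vector because `companionMatrix` carries the
coefficients in its last column. -/
def window {R : Type*} (d : ℕ) (s : ℕ → R) (n : ℕ) : Fin d → R := fun i => s (n + i)

variable {R : Type*} [CommRing R] {f : R[X]} {s : ℕ → R}

theorem Annihilates.apply_add_natDegree (hs : Annihilates f s) (hf : f.Monic) (n : ℕ) :
    s (n + f.natDegree) = -∑ i : Fin f.natDegree, f.coeff i * s (n + i) := by
  have h := hs n
  rw [Finset.sum_range_succ, hf.coeff_natDegree, one_mul, Finset.sum_range] at h
  exact eq_neg_of_add_eq_zero_right h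

theorem Annihilates.eq_zero_of_natDegree_eq_zero (hs : Annihilates f s) (hf : f.Monic)
    (hdeg : f.natDegree = 0) : s = 0 := by
  obtain rfl := hf.natDegree_eq_zero.mp hdeg
  ext n
  simpa using hs n

theorem Annihilates.window_vecMul_companionMatrix (hs : Annihilates f s) (hf : f.Monic) (n : ℕ) :
    window f.natDegree s n ᵥ* companionMatrix f.natDegree f = window f.natDegree s (n + 1) := by
  ext j
  simp only [vecMul, dotProduct, window, companionMatrix, of_apply]
  by_cases hj : (j : ℕ) = f.natDegree - 1
  · have hlast : n + 1 + (j : ℕ) = n + f.natDegree := by omega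
    rw [hlast, hs.apply_add_natDegree hf, ← Finset.sum_neg_distrib]
    refine Finset.sum_congr rfl fun i _ => ?_
    rw [if_neg (by omega), if_pos hj, mul_neg, mul_comm]
  · rw [Finset.sum_eq_single (⟨j + 1, by omega⟩ : Fin f.natDegree)]
    · simp [add_assoc, add_comm 1]
    · intro i _ hi
      rw [if_neg (fun h => hi (Fin.ext h)), if_neg hj, mul_zero]
    · simp

theorem natDegree_charpoly_kronecker_companionMatrix (p q : R[X]) :
    (companionMatrix p.natDegree p ⊗ₖ companionMatrix q.natDegree q).charpoly.natDegree =
      p.natDegree * q.natDegree := by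
  rcases subsingleton_or_nontrivial R with _ | _
  · simp [natDegree_of_subsingleton]
  · simp [charpoly_natDegree_eq_dim]

theorem annihilates_charpoly_kronecker_of_mul_general {p q : R[X]} (hp : p.Monic) (hq : q.Monic)
    {a b : ℕ → R} (ha : Annihilates p a) (hb : Annihilates q b) :
    (companionMatrix p.natDegree p ⊗ₖ companionMatrix q.natDegree q).charpoly.natDegree =
        p.natDegree * q.natDegree ∧
      Annihilates (companionMatrix p.natDegree p ⊗ₖ companionMatrix q.natDegree q).charpoly
        (fun n => a n * b n) := by
  refine ⟨natDegree_charpoly_kronecker_companionMatrix p q, ?_⟩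
  rcases Nat.eq_zero_or_pos p.natDegree with hp₀ | hp₀
  · simp [ha.eq_zero_of_natDegree_eq_zero hp hp₀, Annihilates]
  rcases Nat.eq_zero_or_pos q.natDegree with hq₀ | hq₀
  · simp [hb.eq_zero_of_natDegree_eq_zero hq hq₀, Annihilates]
  -- `vec` stacks columns, so the window of `a`, the left tensor factor, is the column index.
  let w (n : ℕ) : Fin p.natDegree × Fin q.natDegree → R :=
    vec (vecMulVec (window q.natDegree b n) (window p.natDegree a n))
  have hw (n : ℕ) :
      w n ᵥ* (companionMatrix p.natDegree p ⊗ₖ companionMatrix q.natDegree q) = w (n + 1) := by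
    rw [vec_vecMulVec_vecMul_kronecker, ha.window_vecMul_companionMatrix hp,
      hb.window_vecMul_companionMatrix hq]
  have hw₀ (n : ℕ) : w n (⟨0, hp₀⟩, ⟨0, hq₀⟩) = a n * b n := mul_comm (b n) (a n)
  simpa only [hw₀] using
    annihilates_of_vecMul_eq_succ_of_aeval_eq_zero hw (aeval_self_charpoly _)
      (⟨0, hp₀⟩, ⟨0, hq₀⟩)

end

/-- If `(aₙ)` and `(bₙ)` are annihilated by monic polynomials `p`, `q` of degrees
`d, e ≥ 1`, then the product sequence `(aₙ · bₙ)` is annihilated by the characteristic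
polynomial of the Kronecker product `C_p ⊗ C_q` of the companion matrices; in
particular it satisfies a linear recurrence of order `d * e` with constant
coefficients, since that characteristic polynomial is monic of degree `d * e`. -/
theorem annihilates_charpoly_kronecker_of_mul {K : Type*} [Field K] (d e : ℕ)
    (hd : 1 ≤ d) (he : 1 ≤ e) (p q : Polynomial K) (hp : p.Monic) (hq : q.Monic)
    (hpd : p.natDegree = d) (hqe : q.natDegree = e) (a b : ℕ → K)
    (ha : Annihilates p a) (hb : Annihilates q b) :
    ((companionMatrix d p ⊗ₖ companionMatrix e q).charpoly).natDegree = d * e ∧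
      Annihilates ((companionMatrix d p ⊗ₖ companionMatrix e q).charpoly)
        (fun n => a n * b n) := by
  subst hpd hqe
  exact annihilates_charpoly_kronecker_of_mul_general hp hq ha hb
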